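/- For every multi-index I of Lorentz boosts and every c ∈ {1,2,3}, there exist smooth functions σ^{Ia}_{cJ} defined on the cone K = {|x| < t-1} such that: (i) for every smooth function u on K, [L^I, ∂̲_c] u = Σ_{|J| < |I|, a ∈ {1,2,3}} σ^{Ia}_{cJ} ∂̲_a L^J u; and (ii) for all multi-indices I₁ (of coordinate derivatives) and J₁ (of Lorentz boosts) there is a constant C(|I|,|J|,|I₁|,|J₁|) with |∂^{I₁} L^{J₁} σ^{Ia}_{cJ}| ≤ C(|I|,|J|,|I₁|,|J₁|) t^{-|I₁|} everywhere in K. -/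

import Mathlib

/-!
On `{t > 0}` one has `∂̲_c = t⁻¹ L_c`, and a direct computation with symmetric second derivatives
gives the exact one-step commutator `[L_a, ∂̲_c] = -(x^c / t) ∂̲_a` (`Lb_sdu`). Writing
`L_a L^I ∂̲_c u = L_a ∂̲_c L^I u + L_a [L^I, ∂̲_c] u` and induction on `I` then show that
`[L^I, ∂̲_c] u` is a finite sum of terms `f ∂̲_b L^J u` with `|J| < |I|`, because
`L_a (f ∂̲_b L^J u) = (L_a f) ∂̲_b L^J u + f ∂̲_b L_a L^J u - f (x^b / t) ∂̲_a L^J u`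
(`SduRep.boost`, `exists_rep`).

The coefficients `f` that arise lie in the algebra generated by the constants, the coordinates and
`t⁻¹`, graded by decay (`Symb`): a coordinate has weight `-1` and `t⁻¹` has weight `1`. A coordinate
derivative raises the weight by one, a boost preserves it, and an element of weight `n` is
`O(t^{-n})` in `K`, since `|x^a| < t` there. As `x^c / t` has weight `0`, so do all coefficients,
which is the estimate claimed.
-/

noncomputable section

open MeasureTheory Real

def pd (α : Fin 4) (u : (Fin 4 → ℝ) → ℝ) : (Fin 4 → ℝ) → ℝ :=
  fun p => fderiv ℝ u p (Pi.single α 1)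

def pdI : List (Fin 4) → ((Fin 4 → ℝ) → ℝ) → ((Fin 4 → ℝ) → ℝ)
  | [], u => u
  | α :: I, u => pd α (pdI I u)

def Lb (a : Fin 3) (u : (Fin 4 → ℝ) → ℝ) : (Fin 4 → ℝ) → ℝ :=
  fun p => p a.succ * pd 0 u p + p 0 * pd a.succ u p

def LJ : List (Fin 3) → ((Fin 4 → ℝ) → ℝ) → ((Fin 4 → ℝ) → ℝ)
  | [], u => u
  | a :: J, u => Lb a (LJ J u)

def sdu (a : Fin 3) (u : (Fin 4 → ℝ) → ℝ) : (Fin 4 → ℝ) → ℝ :=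
  fun p => (p a.succ / p 0) * pd 0 u p + pd a.succ u p

def Box (u : (Fin 4 → ℝ) → ℝ) : (Fin 4 → ℝ) → ℝ :=
  fun p => -(pd 0 (pd 0 u) p) + ∑ a : Fin 3, pd a.succ (pd a.succ u) p

def rad (x : Fin 3 → ℝ) : ℝ := Real.sqrt (∑ a, (x a)^2)

def sp (p : Fin 4 → ℝ) : Fin 3 → ℝ := fun a => p a.succ

def hyp (s : ℝ) (x : Fin 3 → ℝ) : Fin 4 → ℝ :=
  Fin.cons (Real.sqrt (s^2 + ∑ a, (x a)^2)) x

def L2f (s : ℝ) (w : (Fin 4 → ℝ) → ℝ) : ℝ :=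
  Real.sqrt (∫ x : Fin 3 → ℝ, (w (hyp s x))^2)

def SuppK (u : (Fin 4 → ℝ) → ℝ) : Prop :=
  ∀ p : Fin 4 → ℝ, p 0 - 1 < rad (sp p) → u p = 0

def Em (s : ℝ) (u : (Fin 4 → ℝ) → ℝ) : ℝ :=
  ∫ x : Fin 3 → ℝ,
    (((s / hyp s x 0) * pd 0 u (hyp s x))^2 + ∑ a : Fin 3, (sdu a u (hyp s x))^2)

def Emc (c s : ℝ) (u : (Fin 4 → ℝ) → ℝ) : ℝ :=
  Em s u + c^2 * ∫ x : Fin 3 → ℝ, (u (hyp s x))^2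

def Kset : Set (Fin 4 → ℝ) := {p | rad (sp p) < p 0 - 1}

/-! ### Calculus of coordinate derivatives and boosts -/

/-- The open half space `t > 0`, which contains the cone `K` and on which `1 / t` is smooth. -/
def Upos : Set (Fin 4 → ℝ) := {p | 0 < p 0}

lemma isOpen_Upos : IsOpen Upos := isOpen_lt continuous_const (continuous_apply 0)

lemma Kset_bounds {p : Fin 4 → ℝ} (hp : p ∈ Kset) : 1 < p 0 ∧ ∀ α, |p α| ≤ p 0 := by
  have hp : rad (sp p) < p 0 - 1 := hp
  have h0 : 0 ≤ rad (sp p) := Real.sqrt_nonneg _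
  refine ⟨by linarith, fun α => ?_⟩
  refine Fin.cases ?_ (fun a => ?_) α
  · rw [abs_of_pos (by linarith)]
  · have : |p a.succ| ≤ rad (sp p) := by
      apply Real.abs_le_sqrt
      exact Finset.single_le_sum (f := fun a => (sp p a) ^ 2) (fun i _ => sq_nonneg _)
        (Finset.mem_univ a)
    linarith

lemma Kset_subset : Kset ⊆ Upos := fun _ hp => lt_trans one_pos (Kset_bounds hp).1

lemma pd_congr {f g : (Fin 4 → ℝ) → ℝ} (h : Set.EqOn f g Upos) (α : Fin 4) :
    Set.EqOn (pd α f) (pd α g) Upos := by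
  intro p hp
  have : f =ᶠ[nhds p] g := h.eventuallyEq_of_mem (isOpen_Upos.mem_nhds hp)
  simp only [pd, this.fderiv_eq]

lemma Lb_congr {f g : (Fin 4 → ℝ) → ℝ} (h : Set.EqOn f g Upos) (a : Fin 3) :
    Set.EqOn (Lb a f) (Lb a g) Upos := by
  intro p hp
  simp only [Lb, pd_congr h _ hp]

lemma pd_add {f g : (Fin 4 → ℝ) → ℝ} {p : Fin 4 → ℝ} (hf : DifferentiableAt ℝ f p)
    (hg : DifferentiableAt ℝ g p) (α : Fin 4) :
    pd α (fun q => f q + g q) p = pd α f p + pd α g p := by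
  simp only [pd]
  rw [fderiv_fun_add hf hg]; rfl

lemma pd_mul {f g : (Fin 4 → ℝ) → ℝ} {p : Fin 4 → ℝ} (hf : DifferentiableAt ℝ f p)
    (hg : DifferentiableAt ℝ g p) (α : Fin 4) :
    pd α (fun q => f q * g q) p = pd α f p * g p + f p * pd α g p := by
  simp only [pd]
  rw [fderiv_fun_mul hf hg]
  simp
  ring

lemma pd_coord (α β : Fin 4) (p : Fin 4 → ℝ) :
    pd α (fun q => q β) p = if β = α then 1 else 0 := by
  simp only [pd]
  rw [(hasFDerivAt_apply β p).fderiv]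
  simp [Pi.single_apply]

lemma pd_inv (α : Fin 4) {p : Fin 4 → ℝ} (hp : p ∈ Upos) :
    pd α (fun q => (q 0)⁻¹) p = (if 0 = α then -1 else 0) * ((p 0)⁻¹ * (p 0)⁻¹) := by
  have h0 : p 0 ≠ 0 := ne_of_gt hp
  simp only [pd]
  have h : HasFDerivAt (fun q : Fin 4 → ℝ => (q 0)⁻¹) _ p :=
    (hasDerivAt_inv h0).comp_hasFDerivAt p (hasFDerivAt_apply (𝕜 := ℝ) 0 p)
  rw [h.fderiv]
  simp [Pi.single_apply]
  split_ifs
  · field_simp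
  · exact neg_zero

lemma Lb_add {f g : (Fin 4 → ℝ) → ℝ} {p : Fin 4 → ℝ} (hf : DifferentiableAt ℝ f p)
    (hg : DifferentiableAt ℝ g p) (a : Fin 3) :
    Lb a (fun q => f q + g q) p = Lb a f p + Lb a g p := by
  simp only [Lb, pd_add hf hg]; ring

lemma Lb_mul {f g : (Fin 4 → ℝ) → ℝ} {p : Fin 4 → ℝ} (hf : DifferentiableAt ℝ f p)
    (hg : DifferentiableAt ℝ g p) (a : Fin 3) :
    Lb a (fun q => f q * g q) p = Lb a f p * g p + f p * Lb a g p := by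
  simp only [Lb, pd_mul hf hg]; ring

lemma contDiff_pd {u : (Fin 4 → ℝ) → ℝ} (hu : ContDiff ℝ (⊤ : ℕ∞) u) (α : Fin 4) :
    ContDiff ℝ (⊤ : ℕ∞) (pd α u) :=
  (hu.fderiv_right (m := (⊤ : ℕ∞)) (by simp)).clm_apply contDiff_const

lemma contDiff_Lb {u : (Fin 4 → ℝ) → ℝ} (hu : ContDiff ℝ (⊤ : ℕ∞) u) (a : Fin 3) :
    ContDiff ℝ (⊤ : ℕ∞) (Lb a u) :=
  ((contDiff_apply ℝ ℝ a.succ).mul (contDiff_pd hu 0)).add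
    ((contDiff_apply ℝ ℝ 0).mul (contDiff_pd hu a.succ))

lemma contDiff_LJ {u : (Fin 4 → ℝ) → ℝ} (hu : ContDiff ℝ (⊤ : ℕ∞) u) :
    ∀ J : List (Fin 3), ContDiff ℝ (⊤ : ℕ∞) (LJ J u)
  | [] => hu
  | a :: J => contDiff_Lb (contDiff_LJ hu J) a

lemma pd_comm {u : (Fin 4 → ℝ) → ℝ} (hu : ContDiff ℝ (⊤ : ℕ∞) u) (α β : Fin 4)
    (p : Fin 4 → ℝ) : pd α (pd β u) p = pd β (pd α u) p := by
  have hd : DifferentiableAt ℝ (fderiv ℝ u) p :=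
    (hu.fderiv_right (m := (⊤ : ℕ∞)) (by simp)).differentiable (by simp) p
  have key : ∀ v w : Fin 4 → ℝ,
      fderiv ℝ (fun q => fderiv ℝ u q w) p v = fderiv ℝ (fderiv ℝ u) p v w := by
    intro v w
    rw [fderiv_clm_apply hd (differentiableAt_const w)]
    simp
  have hs : IsSymmSndFDerivAt ℝ u p :=
    hu.contDiffAt.isSymmSndFDerivAt (by
      simpa using (WithTop.coe_le_coe.2 le_top : ((2 : ℕ∞) : WithTop ℕ∞) ≤ ((⊤ : ℕ∞) : WithTop ℕ∞)))
  change fderiv ℝ (fun q => fderiv ℝ u q _) p _ = fderiv ℝ (fun q => fderiv ℝ u q _) p _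
  rw [key, key, hs.eq]

lemma differentiableAt_inv_time {p : Fin 4 → ℝ} (hp : p ∈ Upos) :
    DifferentiableAt ℝ (fun q : Fin 4 → ℝ => (q 0)⁻¹) p :=
  (differentiableAt_apply (𝕜 := ℝ) 0 p).inv (ne_of_gt hp)

lemma sdu_differentiableAt {v : (Fin 4 → ℝ) → ℝ} (hv : ContDiff ℝ (⊤ : ℕ∞) v) (c : Fin 3)
    {p : Fin 4 → ℝ} (hp : p ∈ Upos) : DifferentiableAt ℝ (sdu c v) p := by
  have h0 := (contDiff_pd hv 0).differentiable (by simp) p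
  have h1 := (contDiff_pd hv c.succ).differentiable (by simp) p
  exact (((differentiableAt_apply c.succ p).mul (differentiableAt_inv_time hp)).mul h0).add h1

/-- The one-step commutator `[L_a, ∂̲_c] = -(x^c / t) ∂̲_a`. -/
lemma Lb_sdu {v : (Fin 4 → ℝ) → ℝ} (hv : ContDiff ℝ (⊤ : ℕ∞) v) (a c : Fin 3)
    {p : Fin 4 → ℝ} (hp : p ∈ Upos) :
    Lb a (sdu c v) p = sdu c (Lb a v) p + -(p c.succ * (p 0)⁻¹) * sdu a v p := by
  have h0 : p 0 ≠ 0 := ne_of_gt hp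
  have dv : ∀ α, DifferentiableAt ℝ (pd α v) p := fun α =>
    (contDiff_pd hv α).differentiable (by simp) p
  have dc : ∀ α : Fin 4, DifferentiableAt ℝ (fun q : Fin 4 → ℝ => q α) p := fun α =>
    differentiableAt_apply α p
  have di := differentiableAt_inv_time hp
  have h1 : ∀ α, pd α (sdu c v) p =
      ((if c.succ = α then 1 else 0) * (p 0)⁻¹
        + p c.succ * ((if 0 = α then -1 else 0) * ((p 0)⁻¹ * (p 0)⁻¹))) * pd 0 v p
        + p c.succ * (p 0)⁻¹ * pd α (pd 0 v) p + pd α (pd c.succ v) p := by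
    intro α
    change pd α (fun q => (q c.succ * (q 0)⁻¹) * pd 0 v q + pd c.succ v q) p = _
    rw [pd_add (((dc _).fun_mul di).fun_mul (dv 0)) (dv _), pd_mul ((dc _).fun_mul di) (dv 0),
      pd_mul (dc _) di, pd_coord, pd_inv α hp]
  have h2 : ∀ α, pd α (Lb a v) p =
      (if a.succ = α then 1 else 0) * pd 0 v p + p a.succ * pd α (pd 0 v) p
      + ((if 0 = α then 1 else 0) * pd a.succ v p + p 0 * pd α (pd a.succ v) p) := by
    intro α
    change pd α (fun q => q a.succ * pd 0 v q + q 0 * pd a.succ v q) p = _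
    rw [pd_add ((dc _).fun_mul (dv 0)) ((dc _).fun_mul (dv _)), pd_mul (dc _) (dv 0),
      pd_mul (dc _) (dv _), pd_coord, pd_coord]
  simp only [Lb.eq_1 a (sdu c v), sdu.eq_1 c (Lb a v), h1, h2]
  rw [pd_comm hv a.succ 0, pd_comm hv c.succ 0, pd_comm hv c.succ a.succ]
  have e : (if c.succ = a.succ then (1 : ℝ) else 0) = if a.succ = c.succ then 1 else 0 := by
    simp only [eq_comm]
  have n1 : ∀ b : Fin 3, (0 : Fin 4) ≠ b.succ := fun b => (Fin.succ_ne_zero b).symm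
  simp only [sdu, e, n1, Fin.succ_ne_zero, if_true, if_false]
  field_simp
  ring

/-! ### The graded algebra of coefficients -/

/-- Functions that on `t > 0` belong to the algebra generated by the constants, the coordinates
and `t⁻¹`, graded so that weight `n` corresponds to decay `t^{-n}` in `K`. The last constructor
makes the values at `t ≤ 0` irrelevant. -/
inductive Symb : ℤ → ((Fin 4 → ℝ) → ℝ) → Prop
  | const (c : ℝ) : Symb 0 (fun _ => c)
  | coord (α : Fin 4) : Symb (-1) (fun p => p α)
  | inv : Symb 1 (fun p => (p 0)⁻¹)
  | add {n : ℤ} {f g : (Fin 4 → ℝ) → ℝ} : Symb n f → Symb n g → Symb n (fun p => f p + g p)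
  | mul {m n : ℤ} {f g : (Fin 4 → ℝ) → ℝ} :
      Symb m f → Symb n g → Symb (m + n) (fun p => f p * g p)
  | congr {n : ℤ} {f g : (Fin 4 → ℝ) → ℝ} : Symb n f → Set.EqOn g f Upos → Symb n g

namespace Symb

lemma cast {m n : ℤ} {f : (Fin 4 → ℝ) → ℝ} (h : Symb m f) (e : m = n) : Symb n f := e ▸ h

lemma contDiffOn {n : ℤ} {f : (Fin 4 → ℝ) → ℝ} (h : Symb n f) :
    ContDiffOn ℝ (⊤ : ℕ∞) f Upos := by
  induction h with
  | const c => exact contDiffOn_const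
  | coord α => exact (contDiff_apply ℝ ℝ α).contDiffOn
  | inv => exact (contDiff_apply ℝ ℝ 0).contDiffOn.inv fun p hp => ne_of_gt hp
  | add _ _ hf hg => exact hf.add hg
  | mul _ _ hf hg => exact hf.mul hg
  | congr _ e hf => exact hf.congr e

lemma differentiableAt {n : ℤ} {f : (Fin 4 → ℝ) → ℝ} (h : Symb n f) {p : Fin 4 → ℝ}
    (hp : p ∈ Upos) : DifferentiableAt ℝ f p :=
  (h.contDiffOn.contDiffAt (isOpen_Upos.mem_nhds hp)).differentiableAt (by simp)

lemma pd {n : ℤ} {f : (Fin 4 → ℝ) → ℝ} (h : Symb n f) (α : Fin 4) :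
    Symb (n + 1) (_root_.pd α f) := by
  induction h with
  | const c =>
    refine (((const 0).mul inv).cast rfl).congr fun p _ => ?_
    simp [_root_.pd]
  | coord β =>
    exact ((const (if β = α then 1 else 0)).cast rfl).congr fun p _ => pd_coord α β p
  | inv =>
    exact (((const (if 0 = α then -1 else 0)).mul (inv.mul inv)).cast rfl).congr
      fun p hp => pd_inv α hp
  | @add n f g hf hg hf' hg' =>
    exact (hf'.add hg').congr fun p hp => pd_add (hf.differentiableAt hp) (hg.differentiableAt hp) α
  | @mul m n f g hf hg hf' hg' =>
    exact (((hf'.mul hg).cast (n := m + n + 1) (by ring)).add ((hf.mul hg').cast (by ring))).congr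
      fun p hp => pd_mul (hf.differentiableAt hp) (hg.differentiableAt hp) α
  | congr _ e hf => exact hf.congr (pd_congr e α)

lemma Lb {n : ℤ} {f : (Fin 4 → ℝ) → ℝ} (h : Symb n f) (a : Fin 3) :
    Symb n (_root_.Lb a f) :=
  (((coord a.succ).mul (h.pd 0)).cast (n := n) (by ring)).add
    (((coord 0).mul (h.pd a.succ)).cast (by ring))

lemma LJ {n : ℤ} {f : (Fin 4 → ℝ) → ℝ} (h : Symb n f) :
    ∀ J : List (Fin 3), Symb n (_root_.LJ J f)
  | [] => h
  | a :: J => (h.LJ J).Lb a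

lemma pdI {n : ℤ} {f : (Fin 4 → ℝ) → ℝ} (h : Symb n f) :
    ∀ I : List (Fin 4), Symb (n + I.length) (_root_.pdI I f)
  | [] => h.cast (by simp)
  | α :: I => ((h.pdI I).pd α).cast (by push_cast [List.length_cons]; ring)

lemma bound {n : ℤ} {f : (Fin 4 → ℝ) → ℝ} (h : Symb n f) :
    ∃ C : ℝ, 0 < C ∧ ∀ p ∈ Kset, |f p| ≤ C * (p 0) ^ (-n) := by
  induction h with
  | const c =>
    refine ⟨|c| + 1, by positivity, fun p _ => ?_⟩
    simp
  | coord α =>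
    refine ⟨1, one_pos, fun p hp => ?_⟩
    simpa using (Kset_bounds hp).2 α
  | inv =>
    refine ⟨1, one_pos, fun p hp => ?_⟩
    have : 0 < p 0 := Kset_subset hp
    simp [abs_of_pos this]
  | add _ _ hf hg =>
    obtain ⟨A, hA, hf⟩ := hf
    obtain ⟨B, hB, hg⟩ := hg
    refine ⟨A + B, by positivity, fun p hp => ?_⟩
    rw [add_mul]
    exact (abs_add_le _ _).trans (add_le_add (hf p hp) (hg p hp))
  | mul _ _ hf hg =>
    obtain ⟨A, hA, hf⟩ := hf
    obtain ⟨B, hB, hg⟩ := hg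
    refine ⟨A * B, by positivity, fun p hp => ?_⟩
    have h0 : 0 < p 0 := Kset_subset hp
    rw [abs_mul, neg_add, zpow_add₀ h0.ne', mul_mul_mul_comm]
    exact mul_le_mul (hf p hp) (hg p hp) (abs_nonneg _) (by positivity)
  | congr _ e hf =>
    obtain ⟨A, hA, hf⟩ := hf
    exact ⟨A, hA, fun p hp => by rw [e (Kset_subset hp)]; exact hf p hp⟩

end Symb

/-! ### Operators of the form `Σ f ∂̲_b L^J` -/

/-- Operators that are finite sums of terms `f ∂̲_b L^J` with `f` of weight `0` and `|J| < n`. -/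
inductive SduRep (n : ℕ) : (((Fin 4 → ℝ) → ℝ) → ((Fin 4 → ℝ) → ℝ)) → Prop
  | zero : SduRep n (fun _ _ => 0)
  | term {f : (Fin 4 → ℝ) → ℝ} (hf : Symb 0 f) (J : List (Fin 3)) (hJ : J.length < n)
      (b : Fin 3) : SduRep n (fun u p => f p * sdu b (LJ J u) p)
  | add {F G : ((Fin 4 → ℝ) → ℝ) → ((Fin 4 → ℝ) → ℝ)} :
      SduRep n F → SduRep n G → SduRep n (fun u p => F u p + G u p)

namespace SduRep

lemma differentiableAt {n : ℕ} {F : ((Fin 4 → ℝ) → ℝ) → ((Fin 4 → ℝ) → ℝ)} (h : SduRep n F)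
    {u : (Fin 4 → ℝ) → ℝ} (hu : ContDiff ℝ (⊤ : ℕ∞) u) {p : Fin 4 → ℝ} (hp : p ∈ Upos) :
    DifferentiableAt ℝ (F u) p := by
  induction h with
  | zero => exact differentiableAt_const _
  | term hf J hJ b =>
    exact (hf.differentiableAt hp).mul (sdu_differentiableAt (contDiff_LJ hu J) b hp)
  | add _ _ hF hG => exact hF.add hG

/-- Composing with a boost raises the admissible order by one. -/
lemma boost {n : ℕ} {F : ((Fin 4 → ℝ) → ℝ) → ((Fin 4 → ℝ) → ℝ)} (h : SduRep n F) (a : Fin 3) :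
    ∃ G, SduRep (n + 1) G ∧ ∀ u, ContDiff ℝ (⊤ : ℕ∞) u → Set.EqOn (Lb a (F u)) (G u) Upos := by
  induction h with
  | zero =>
    refine ⟨_, zero, fun u _ p _ => ?_⟩
    simp [Lb, pd]
  | @term f hf J hJ b =>
    refine ⟨_, ((term (hf.Lb a) J (by omega) b).add (term hf (a :: J) (by simpa) b)).add
      (term (((hf.mul (((Symb.const (-1)).mul ((Symb.coord b.succ).mul Symb.inv)))).cast rfl))
        J (by omega) a), fun u hu p hp => ?_⟩
    have hJ := contDiff_LJ hu J
    rw [Lb_mul (hf.differentiableAt hp) (sdu_differentiableAt hJ b hp), Lb_sdu hJ a b hp]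
    simp only [LJ]
    ring
  | add hF hG hF' hG' =>
    obtain ⟨F', h1, h2⟩ := hF'
    obtain ⟨G', h3, h4⟩ := hG'
    refine ⟨_, h1.add h3, fun u hu p hp => ?_⟩
    rw [Lb_add (hF.differentiableAt hu hp) (hG.differentiableAt hu hp), h2 u hu hp, h4 u hu hp]

/-- Collecting the terms of an operator according to the multi-index `J` and the index `a`. -/
lemma exists_coeff {n : ℕ} {F : ((Fin 4 → ℝ) → ℝ) → ((Fin 4 → ℝ) → ℝ)} (h : SduRep n F) :
    ∃ σ : (k : ℕ) → (Fin k → Fin 3) → Fin 3 → ((Fin 4 → ℝ) → ℝ),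
      (∀ k J a, Symb 0 (σ k J a)) ∧ (∀ k J a, n ≤ k → σ k J a = fun _ => 0) ∧
      ∀ u p, F u p = ∑ k ∈ Finset.range n, ∑ J : Fin k → Fin 3, ∑ a : Fin 3,
                σ k J a p * sdu a (LJ (List.ofFn J) u) p := by
  induction h with
  | zero =>
    exact ⟨fun _ _ _ _ => 0, fun _ _ _ => Symb.const 0, fun _ _ _ _ => rfl, fun u p => by simp⟩
  | @term f hf J hJ b =>
    obtain ⟨k, J, rfl⟩ : ∃ k, ∃ J' : Fin k → Fin 3, J = List.ofFn J' :=
      ⟨_, J.get, (List.ofFn_get J).symm⟩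
    rw [List.length_ofFn] at hJ
    refine ⟨fun k' J' a => if List.ofFn J' = List.ofFn J ∧ a = b then f else fun _ => 0,
      fun k' J' a => ?_, fun k' J' a hk => ?_, fun u p => ?_⟩
    · dsimp only
      split_ifs
      · exact hf
      · exact Symb.const 0
    · refine if_neg fun h => ?_
      have := congrArg List.length h.1
      simp only [List.length_ofFn] at this
      omega
    · rw [Finset.sum_eq_single k, Finset.sum_eq_single J, Finset.sum_eq_single b]
      · simp
      · intro a _ ha
        simp [ha]
      · simp
      · intro J' _ hJ'
        have : List.ofFn J' ≠ List.ofFn J := fun h => hJ' (List.ofFn_injective h)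
        simp [this]
      · simp
      · intro k' _ hk'
        refine Finset.sum_eq_zero fun J' _ => ?_
        have : List.ofFn J' ≠ List.ofFn J := fun h => hk' (by simpa using congrArg List.length h)
        simp [this]
      · intro h
        exact absurd (Finset.mem_range.2 hJ) h
  | add _ _ hF hG =>
    obtain ⟨σ, h1, h2, h3⟩ := hF
    obtain ⟨τ, h4, h5, h6⟩ := hG
    refine ⟨fun k J a p => σ k J a p + τ k J a p, fun k J a => (h1 k J a).add (h4 k J a),
      fun k J a hk => by simp [h2 k J a hk, h5 k J a hk], fun u p => ?_⟩
    simp only [h3, h6, add_mul, Finset.sum_add_distrib]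

end SduRep

/-- The commutator `[L^I, ∂̲_c]` is, on `t > 0`, a sum of terms `f ∂̲_b L^J` with `|J| < |I|`. It is
stated additively so that the equality of functions on an open set can be differentiated. -/
lemma exists_rep (I : List (Fin 3)) (c : Fin 3) :
    ∃ F, SduRep I.length F ∧ ∀ u, ContDiff ℝ (⊤ : ℕ∞) u →
      Set.EqOn (LJ I (sdu c u)) (fun p => sdu c (LJ I u) p + F u p) Upos := by
  induction I with
  | nil => exact ⟨_, SduRep.zero, fun u _ p _ => by simp [LJ]⟩
  | cons a I ih =>
    obtain ⟨F, hF, h⟩ := ih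
    obtain ⟨G, hG, hFG⟩ := hF.boost a
    refine ⟨_, (SduRep.term (((Symb.const (-1)).mul ((Symb.coord c.succ).mul Symb.inv)).cast rfl)
      I (by simp) a).add hG, fun u hu p hp => ?_⟩
    have hI := contDiff_LJ hu I
    change Lb a (LJ I (sdu c u)) p = _
    rw [Lb_congr (h u hu) a hp, Lb_add (sdu_differentiableAt hI c hp) (hF.differentiableAt hu hp),
      hFG u hu hp, Lb_sdu hI a c hp]
    simp only [LJ]
    ring

/-- commutator decomposition IV:
`[L^I, ∂̲_c] u = Σ_{|J|<|I|, a} σ^{Ia}_{cJ} ∂̲_a L^J u` where the coefficients `σ` are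
smooth on `K` and satisfy `|∂^{I₁} L^{J₁} σ^{Ia}_{cJ}| ≤ C t^{-|I₁|}` in `K`. -/
theorem commutator_boosts_sdu_decomposition (I : List (Fin 3)) (c : Fin 3) :
    ∃ σ : (k : ℕ) → (Fin k → Fin 3) → Fin 3 → ((Fin 4 → ℝ) → ℝ),
      (∀ (k : ℕ) (J : Fin k → Fin 3) (a : Fin 3), ContDiffOn ℝ (⊤ : ℕ∞) (σ k J a) Kset) ∧
      (∀ u : (Fin 4 → ℝ) → ℝ, ContDiff ℝ (⊤ : ℕ∞) u →
        ∀ p ∈ Kset,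
          LJ I (sdu c u) p - sdu c (LJ I u) p
            = ∑ k ∈ Finset.range I.length, ∑ J : Fin k → Fin 3, ∑ a : Fin 3,
                σ k J a p * sdu a (LJ (List.ofFn J) u) p) ∧
      (∀ (I₁ : List (Fin 4)) (J₁ : List (Fin 3)),
        ∃ C : ℝ, 0 < C ∧
          ∀ (k : ℕ) (J : Fin k → Fin 3) (a : Fin 3), ∀ p ∈ Kset,
            |pdI I₁ (LJ J₁ (σ k J a)) p| ≤ C / (p 0) ^ I₁.length) := by
  obtain ⟨F, hF, hcomm⟩ := exists_rep I c
  obtain ⟨σ, h1, h2, h3⟩ := hF.exists_coeff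
  refine ⟨σ, fun k J a => (h1 k J a).contDiffOn.mono Kset_subset, fun u hu p hp => ?_,
    fun I₁ J₁ => ?_⟩
  · rw [hcomm u hu (Kset_subset hp), ← h3 u p]
    ring
  · have hS : ∀ {f : (Fin 4 → ℝ) → ℝ}, Symb 0 f → ∃ C : ℝ, 0 < C ∧ ∀ p ∈ Kset,
        |pdI I₁ (LJ J₁ f) p| ≤ C / (p 0) ^ I₁.length := by
      intro f hf
      obtain ⟨C, hC, h⟩ := ((hf.LJ J₁).pdI I₁).bound
      refine ⟨C, hC, fun p hp => (h p hp).trans_eq ?_⟩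
      rw [zero_add, zpow_neg, zpow_natCast, div_eq_mul_inv]
    choose C hC hb using fun k J a => hS (h1 k J a)
    obtain ⟨C₀, hC₀, hb₀⟩ := hS (Symb.const 0)
    -- Only finitely many coefficients are nonzero; `C₀` covers the vanishing ones.
    have hs : ∀ k, 0 ≤ ∑ J, ∑ a, C k J a := fun k =>
      Finset.sum_nonneg fun J _ => Finset.sum_nonneg fun a _ => (hC k J a).le
    have hS0 : 0 ≤ ∑ k ∈ Finset.range I.length, ∑ J, ∑ a, C k J a :=
      Finset.sum_nonneg fun k _ => hs k
    refine ⟨C₀ + ∑ k ∈ Finset.range I.length, ∑ J, ∑ a, C k J a, by linarith,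
      fun k J a p hp => ?_⟩
    have h0 : 0 < p 0 := Kset_subset hp
    rcases lt_or_ge k I.length with hk | hk
    · refine (hb k J a p hp).trans (div_le_div_of_nonneg_right ?_ (by positivity))
      have e1 : C k J a ≤ ∑ a, C k J a :=
        Finset.single_le_sum (f := fun a => C k J a) (fun a _ => (hC k J a).le) (Finset.mem_univ a)
      have e2 : ∑ a, C k J a ≤ ∑ J, ∑ a, C k J a :=
        Finset.single_le_sum (f := fun J => ∑ a, C k J a)
          (fun J _ => Finset.sum_nonneg fun a _ => (hC k J a).le) (Finset.mem_univ J)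
      have e3 : ∑ J, ∑ a, C k J a ≤ ∑ k ∈ Finset.range I.length, ∑ J, ∑ a, C k J a :=
        Finset.single_le_sum (f := fun k => ∑ J, ∑ a, C k J a) (fun k _ => hs k)
          (Finset.mem_range.2 hk)
      linarith
    · rw [h2 k J a hk]
      exact (hb₀ p hp).trans (div_le_div_of_nonneg_right (by linarith) (by positivity))
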